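/- arXiv:2203.02825 — 3 statements merged into one kernel-verified Lean document; each statement's English description precedes it below -/
import Mathlib

section
/- Define the fundamental 2-form ω by ω_p(a,b) := g_p(a, J_p b). Then ω_p is independent of p: for every p ∈ ℝ^{2m}, ω_p is the alternating bilinear form whose matrix has entries ω₁₂ = 1 = −ω₂₁, ω_{2k−1,2k} = −1 = −ω_{2k,2k−1} for k = 2, …, m, and all other entries 0. In particular ω is a nondegenerate alternating 2-form with constant coefficients, hence closed; so ω is a symplectic form on ℝ^{2m} and (g, J) is an almost Kähler structure. -/
/-!
Here `e₁, e₂, …` are the vectors `ee 0, ee 1, …` of the standard basis.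
From `e₁ = T - Z` and `e₂ = ((H + 1)/2) e₁ - T` one gets `J e₁ = H e₁ - 2 e₂` and
`J e₂ = ((H² + 1)/2) e₁ - H e₂` (`J_ee_zero`, `J_ee_one`). Pairing these with `g`, all terms
in `H` cancel, so `ω(a, e_i)` is `± a_j` with `j` the index paired with `i`
(`om_ee_zero`, `om_ee_one`, `om_ee_even`, `om_ee_odd`). Expanding `b` in the standard basis gives
the coordinate formula for `ω`, which is visibly alternating. Since every coordinate of `a` occurs,
up to sign, as some `ω(a, e_i)`, the form is nondegenerate.
-/

noncomputable section

/-- Points of ℝⁿ (dimension `n+3`, so that the dimension is at least 3):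
coordinate `0` is `v`, coordinate `1` is `u`, coordinates `2,…,n+2` are the `xⁱ`. -/
abbrev V (n : ℕ) : Type := Fin (n+3) → ℝ

/-- The standard basis vectors. -/
def ee {n : ℕ} (i : Fin (n+3)) : V n := Pi.single i 1

/-- The standard Riemannian dual metric `g`. -/
def gg {n : ℕ} (H : V n → ℝ) (p : V n) (a b : V n) : ℝ :=
  2 * a 0 * b 0 + H p * (a 0 * b 1 + a 1 * b 0) + (1 + H p ^ 2) / 2 * (a 1 * b 1)
    + ∑ i : Fin (n+3), if 2 ≤ (i : ℕ) then a i * b i else 0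

/-- The vector field `T`. -/
def TT {n : ℕ} (H : V n → ℝ) (p : V n) : V n := ((H p + 1) / 2) • ee 0 - ee 1

/-- The vector field `Z`. -/
def ZZ {n : ℕ} (H : V n → ℝ) (p : V n) : V n := ((H p - 1) / 2) • ee 0 - ee 1

/-- The (constant) coordinate vector fields `X_i`. -/
def XX {n : ℕ} (i : Fin (n+3)) : V n → V n := fun _ => ee i

/-- Partial derivative of `H` in the `i`-th coordinate direction. -/
def Hd {n : ℕ} (H : V n → ℝ) (i : Fin (n+3)) (p : V n) : ℝ := fderiv ℝ H p (ee i)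

/-- `H` is independent of the first coordinate `v`. -/
def VIndep {n : ℕ} (H : V n → ℝ) : Prop :=
  ∀ (p : V n) (c : ℝ), H (Function.update p 0 c) = H p

/- Even dimension: the dimension is `2*m+1+3 = 2(m+2)`, an arbitrary even number `≥ 4`
(the paper's `m` corresponds to our `m + 2`).  The "X" coordinates are the indices
`2, 3, …, 2m+3`, paired as `(2k+2, 2k+3)` for `k = 0, …, m`. -/

/-- The defining properties of the almost complex structure `J`: `J T = Z`, `J Z = -T`,
`J X_{2k-1} = X_{2k}`, `J X_{2k} = -X_{2k-1}` (in the pairing described above). -/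
def JStruct (m : ℕ) (H : V (2*m+1) → ℝ)
    (J : V (2*m+1) → (V (2*m+1) →ₗ[ℝ] V (2*m+1))) : Prop :=
  (∀ p, J p (TT H p) = ZZ H p) ∧
  (∀ p, J p (ZZ H p) = - TT H p) ∧
  (∀ p, ∀ (k : ℕ) (hk : k ≤ m),
    J p (ee (⟨2*k+2, by omega⟩ : Fin (2*m+1+3))) = ee ⟨2*k+3, by omega⟩) ∧
  (∀ p, ∀ (k : ℕ) (hk : k ≤ m),
    J p (ee (⟨2*k+3, by omega⟩ : Fin (2*m+1+3))) = - ee ⟨2*k+2, by omega⟩)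

/-- The fundamental 2-form `ω_p(a,b) := g_p(a, J_p b)`. -/
def om (m : ℕ) (H : V (2*m+1) → ℝ)
    (J : V (2*m+1) → (V (2*m+1) →ₗ[ℝ] V (2*m+1)))
    (p a b : V (2*m+1)) : ℝ :=
  gg H p a (J p b)

lemma even_lt {m : ℕ} (k : Fin (m+1)) : 2*(k:ℕ)+2 < 2*m+1+3 := by omega

lemma odd_lt {m : ℕ} (k : Fin (m+1)) : 2*(k:ℕ)+3 < 2*m+1+3 := by omega

/-- The coordinates `0, …, 2m+3` consist of `0`, `1` and the pairs `(2k+2, 2k+3)`. -/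
lemma sum_pairs {M : Type*} [AddCommMonoid M] (m : ℕ) (f : Fin (2*m+1+3) → M) :
    ∑ i, f i = f 0 + f 1 + ∑ k : Fin (m+1),
      (f ⟨2*(k:ℕ)+2, even_lt k⟩ + f ⟨2*(k:ℕ)+3, odd_lt k⟩) := by
  have key : ∀ (h : ℕ → M) (l : ℕ), ∑ i ∈ Finset.range (2*l+2), h i
      = h 0 + h 1 + ∑ k ∈ Finset.range l, (h (2*k+2) + h (2*k+3)) := by
    intro h l
    induction l with
    | zero => simp [Finset.sum_range_succ]
    | succ l ih =>
      rw [show 2*(l+1)+2 = 2*l+2+1+1 by ring, Finset.sum_range_succ, Finset.sum_range_succ, ih,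
        Finset.sum_range_succ]
      simp only [add_assoc]
  -- `f` extended by zero to all of `ℕ`
  let h : ℕ → M := fun i => if hi : i < 2*m+1+3 then f ⟨i, hi⟩ else 0
  have hf : ∀ (i : ℕ) (hi : i < 2*m+1+3), f ⟨i, hi⟩ = h i := fun i hi => by simp [h, hi]
  have h0 : f 0 = h 0 := hf 0 (by omega)
  have h1 : f 1 = h 1 := by
    rw [← hf 1 (by omega)]
    congr 1
  have hL : ∑ i, f i = ∑ i : Fin (2*m+1+3), h i := Finset.sum_congr rfl fun i _ => hf i i.isLt
  rw [hL, h0, h1]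
  simp only [hf]
  rw [Fin.sum_univ_eq_sum_range h,
    Fin.sum_univ_eq_sum_range (fun k => h (2*k+2) + h (2*k+3)),
    show 2*m+1+3 = 2*(m+1)+2 by ring, key]

/-- The covector `g_p(a, ·)`. -/
def ggLin {n : ℕ} (H : V n → ℝ) (p a : V n) : V n →ₗ[ℝ] ℝ where
  toFun := gg H p a
  map_add' x y := by
    have : ∀ i : Fin (n+3), (if 2 ≤ (i : ℕ) then a i * (x + y) i else 0)
        = (if 2 ≤ (i : ℕ) then a i * x i else 0) + (if 2 ≤ (i : ℕ) then a i * y i else 0) := by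
      intro i
      split_ifs <;> simp [mul_add]
    simp only [gg]
    rw [Finset.sum_congr rfl fun i _ => this i, Finset.sum_add_distrib]
    simp only [Pi.add_apply]
    ring
  map_smul' c x := by
    have : ∀ i : Fin (n+3), (if 2 ≤ (i : ℕ) then a i * (c • x) i else 0)
        = c * (if 2 ≤ (i : ℕ) then a i * x i else 0) := by
      intro i
      split_ifs <;> simp [mul_left_comm]
    simp only [gg]
    rw [Finset.sum_congr rfl fun i _ => this i, ← Finset.mul_sum]
    simp only [Pi.smul_apply, smul_eq_mul, RingHom.id_apply]
    ring

lemma ggLin_ee_zero {n : ℕ} (H : V n → ℝ) (p a : V n) :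
    ggLin H p a (ee 0) = 2 * a 0 + H p * a 1 := by
  have : ∀ i : Fin (n+3), (if 2 ≤ (i : ℕ) then a i * (ee 0 : V n) i else 0) = 0 := by
    intro i
    split_ifs with hi
    · have : i ≠ 0 := by rintro rfl; simp at hi
      simp [ee, this]
    · rfl
  change gg H p a (ee 0) = _
  simp only [gg, this]
  simp [ee]

lemma ggLin_ee_one {n : ℕ} (H : V n → ℝ) (p a : V n) :
    ggLin H p a (ee 1) = H p * a 0 + (1 + H p ^ 2) / 2 * a 1 := by
  have : ∀ i : Fin (n+3), (if 2 ≤ (i : ℕ) then a i * (ee 1 : V n) i else 0) = 0 := by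
    intro i
    split_ifs with hi
    · have : i ≠ 1 := by rintro rfl; simp at hi
      simp [ee, this]
    · rfl
  change gg H p a (ee 1) = _
  simp only [gg, this]
  simp [ee]

lemma ggLin_ee {n : ℕ} (H : V n → ℝ) (p a : V n) (j : Fin (n+3)) (hj : 2 ≤ (j : ℕ)) :
    ggLin H p a (ee j) = a j := by
  have h0 : (0 : Fin (n+3)) ≠ j := by rintro rfl; simp at hj
  have h1 : (1 : Fin (n+3)) ≠ j := by rintro rfl; simp at hj
  have : ∀ i : Fin (n+3), (if 2 ≤ (i : ℕ) then a i * (ee j : V n) i else 0)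
      = if i = j then a j else 0 := by
    intro i
    by_cases h : i = j
    · subst h
      simp [ee, hj]
    · simp [ee, h]
  change gg H p a (ee j) = _
  simp only [gg, this]
  simp [ee, h0, h1]

section
variable {m : ℕ} {H : V (2*m+1) → ℝ} {J : V (2*m+1) → (V (2*m+1) →ₗ[ℝ] V (2*m+1))}

/-- `J e₁ = H e₁ - 2 e₂`, because `e₁ = T - Z`. -/
lemma J_ee_zero (hJ : JStruct m H J) (p : V (2*m+1)) :
    J p (ee 0) = H p • ee 0 - (2 : ℝ) • ee 1 := by
  have h : (ee 0 : V (2*m+1)) = TT H p - ZZ H p := by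
    simp only [TT, ZZ]
    module
  rw [h, map_sub, hJ.1, hJ.2.1, ← h]
  simp only [TT, ZZ]
  module

/-- `J e₂ = ((H² + 1)/2) e₁ - H e₂`, because `e₂ = ((H + 1)/2) e₁ - T`. -/
lemma J_ee_one (hJ : JStruct m H J) (p : V (2*m+1)) :
    J p (ee 1) = ((H p ^ 2 + 1) / 2) • ee 0 - H p • ee 1 := by
  have h : (ee 1 : V (2*m+1)) = ((H p + 1) / 2) • ee 0 - TT H p := by
    simp only [TT]
    module
  rw [h, map_sub, map_smul, hJ.1, J_ee_zero hJ, ← h]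
  simp only [ZZ]
  module

lemma om_ee_zero (hJ : JStruct m H J) (p a : V (2*m+1)) : om m H J p a (ee 0) = - a 1 := by
  change ggLin H p a (J p (ee 0)) = _
  rw [J_ee_zero hJ, map_sub, map_smul, map_smul, ggLin_ee_zero, ggLin_ee_one]
  simp only [smul_eq_mul]
  ring

lemma om_ee_one (hJ : JStruct m H J) (p a : V (2*m+1)) : om m H J p a (ee 1) = a 0 := by
  change ggLin H p a (J p (ee 1)) = _
  rw [J_ee_one hJ, map_sub, map_smul, map_smul, ggLin_ee_zero, ggLin_ee_one]
  simp only [smul_eq_mul]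
  ring

lemma om_ee_even (hJ : JStruct m H J) (p a : V (2*m+1)) (k : ℕ) (hk : k ≤ m) :
    om m H J p a (ee ⟨2*k+2, by omega⟩) = a ⟨2*k+3, by omega⟩ := by
  change ggLin H p a (J p _) = _
  rw [hJ.2.2.1 p k hk, ggLin_ee _ _ _ _ (by simp)]

lemma om_ee_odd (hJ : JStruct m H J) (p a : V (2*m+1)) (k : ℕ) (hk : k ≤ m) :
    om m H J p a (ee ⟨2*k+3, by omega⟩) = - a ⟨2*k+2, by omega⟩ := by
  change ggLin H p a (J p _) = _
  rw [hJ.2.2.2 p k hk, map_neg, ggLin_ee _ _ _ _ (by simp)]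

lemma om_expand (p a b : V (2*m+1)) :
    om m H J p a b = ∑ i, b i * om m H J p a (ee i) := by
  have hb : b = ∑ i, b i • (ee i : V (2*m+1)) := pi_eq_sum_univ' b
  change ggLin H p a (J p b) = ∑ i, b i * ggLin H p a (J p (ee i))
  conv_lhs => rw [hb]
  simp only [map_sum, map_smul, smul_eq_mul]

end

/-- The fundamental 2-form `ω_p(a,b) = g_p(a, J_p b)` is independent of
`p`, given by the constant-coefficient alternating form with `ω₁₂ = 1 = −ω₂₁` and
`ω_{2k-1,2k} = −1 = −ω_{2k,2k-1}` on the paired "X" coordinates, all other entries zero.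
In particular `ω` is a nondegenerate alternating 2-form with constant coefficients, hence
closed: it is a symplectic form and `(g,J)` is almost Kähler. -/
theorem stmt_6 (m : ℕ) (H : V (2*m+1) → ℝ) (hH : ContDiff ℝ (⊤ : ℕ∞) H) (hHv : VIndep H)
    (J : V (2*m+1) → (V (2*m+1) →ₗ[ℝ] V (2*m+1))) (hJ : JStruct m H J) :
    ∀ p : V (2*m+1),
      (∀ a b : V (2*m+1),
        om m H J p a b = a 0 * b 1 - a 1 * b 0
          - ∑ k : Fin (m+1),
              (a (⟨2*(k:ℕ)+2, by have := k.isLt; omega⟩ : Fin (2*m+1+3))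
                  * b ⟨2*(k:ℕ)+3, by have := k.isLt; omega⟩
                - a ⟨2*(k:ℕ)+3, by have := k.isLt; omega⟩
                  * b ⟨2*(k:ℕ)+2, by have := k.isLt; omega⟩)) ∧
      (∀ a : V (2*m+1), om m H J p a a = 0) ∧
      (∀ a : V (2*m+1), (∀ b : V (2*m+1), om m H J p a b = 0) → a = 0) := by
  intro p
  have formula : ∀ a b : V (2*m+1),
        om m H J p a b = a 0 * b 1 - a 1 * b 0
          - ∑ k : Fin (m+1),
              (a (⟨2*(k:ℕ)+2, by have := k.isLt; omega⟩ : Fin (2*m+1+3))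
                  * b ⟨2*(k:ℕ)+3, by have := k.isLt; omega⟩
                - a ⟨2*(k:ℕ)+3, by have := k.isLt; omega⟩
                  * b ⟨2*(k:ℕ)+2, by have := k.isLt; omega⟩) := by
    intro a b
    rw [om_expand, sum_pairs, om_ee_zero hJ, om_ee_one hJ, sub_eq_add_neg _ (Finset.sum _ _),
      ← Finset.sum_neg_distrib]
    congr 1
    · ring
    · refine Finset.sum_congr rfl fun k _ => ?_
      rw [om_ee_even hJ p a k (by omega), om_ee_odd hJ p a k (by omega)]
      ring
  refine ⟨formula, fun a => ?_, fun a ha => ?_⟩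
  · rw [formula, Finset.sum_eq_zero fun k _ => by ring]
    ring
  · funext ⟨i, hi⟩
    obtain rfl | rfl | ⟨k, rfl | rfl⟩ : i = 0 ∨ i = 1 ∨ ∃ k, i = 2*k+2 ∨ i = 2*k+3 := by
      by_cases h0 : i = 0
      · exact Or.inl h0
      by_cases h1 : i = 1
      · exact Or.inr (Or.inl h1)
      exact Or.inr (Or.inr ⟨(i-2)/2, by omega⟩)
    · exact (om_ee_one hJ p a).symm.trans (ha _)
    · have h := (om_ee_zero hJ p a).symm.trans (ha _)
      have e : (⟨1, hi⟩ : Fin (2*m+1+3)) = 1 := by ext; simp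
      rw [e]
      exact neg_eq_zero.mp h
    · exact neg_eq_zero.mp ((om_ee_odd hJ p a k (by omega)).symm.trans (ha _))
    · exact (om_ee_even hJ p a k (by omega)).symm.trans (ha _)
end
end

section
/- For every t₀ ∈ ℝ, every initial position p₀ ∈ ℝⁿ, and every initial velocity w₀ ∈ ℝⁿ, there exists a twice continuously differentiable curve γ : ℝ → ℝⁿ, defined on all of ℝ, solving the geodesic system with γ(t₀) = p₀ and γ̇(t₀) = w₀; that is, the geodesic equations of the standard Riemannian dual metric have global solutions for all initial data (so (ℝⁿ, g) is geodesically complete), for any choice of smooth H. -/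
/-!
The geodesic system is a first-order system `y' = F y` on the phase space of pairs
`y = (p, w)` (position, velocity). It has two first integrals: the momentum `c = 2 w 0 + w 1 * H p`
of the Killing field `∂_v`, and `e = (w 1)² / 2 + ∑_{i ≥ 2} (w i)²`. Conservation of `e` bounds all
velocity components but `w 0`, hence over bounded time all positions but `p 0`; as `H` does not
depend on `p 0`, it is then bounded along the curve, so `w 0 = (c - w 1 * H p) / 2` and finally `p 0` are
bounded as well.

To turn this a priori bound into global existence without a maximal-solution argument, `F` is
multiplied by a smooth cutoff `χ`. A first integral of `F` is a first integral of `χ • F` for every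
`χ`, so the bound (`geo_bound`) holds for solutions of `y' = χ(y) F(y)` uniformly in
`0 ≤ χ ≤ 1`. The field `χ • F` is bounded and Lipschitz, so Picard–Lindelöf solves it on any given
interval, and by the bound the solution remains where `χ = 1`
(`exists_global_of_cutoff_bound`).
-/

noncomputable section

/-- The geodesic equations of the standard Riemannian dual metric `g`:
`γ` is the curve, `γ'` its velocity and `γ''` its acceleration.
Coordinate `0` is `v`, coordinate `1` is `u`, coordinates `i ≥ 2` are the `xⁱ`. -/
def geo (n : ℕ) (H : V n → ℝ) (γ γ' γ'' : ℝ → V n) (t : ℝ) : Prop :=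
  γ'' t 0 =
      (1/2) * (2 * γ' t 0 + γ' t 1 * H (γ t)) * H (γ t)
          * (∑ i : Fin (n+3), if 2 ≤ (i : ℕ) then Hd H i (γ t) * γ' t i else 0)
        - (1/2) * (∑ i : Fin (n+3), if 2 ≤ (i : ℕ) then Hd H i (γ t) * γ' t i else 0)
            * γ' t 1
        - (1/2) * Hd H 1 (γ t) * (γ' t 1)^2 ∧
  γ'' t 1 =
      -(2 * γ' t 0 + γ' t 1 * H (γ t))
        * (∑ i : Fin (n+3), if 2 ≤ (i : ℕ) then Hd H i (γ t) * γ' t i else 0) ∧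
  ∀ i : Fin (n+3), 2 ≤ (i : ℕ) →
    γ'' t i = (1/2) * (2 * γ' t 0 + γ' t 1 * H (γ t)) * Hd H i (γ t) * γ' t 1

open Set Metric

/-- Global existence from an a priori bound that is uniform over all slowed-down fields `χ • F`,
`0 ≤ χ ≤ 1`. -/
lemma exists_global_of_cutoff_bound {E : Type*} [NormedAddCommGroup E] [NormedSpace ℝ E]
    [FiniteDimensional ℝ E] {F : E → E} (hF : ContDiff ℝ 1 F) (x₀ : E)
    (hbound : ∀ a : ℝ, 0 < a → ∃ R : ℝ, ∀ χ : E → ℝ, (∀ x, 0 ≤ χ x) → (∀ x, χ x ≤ 1) →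
      ∀ y : ℝ → E, y 0 = x₀ →
        (∀ t ∈ Icc (-a) a, HasDerivWithinAt y (χ (y t) • F (y t)) (Icc (-a) a) t) →
        ∀ t ∈ Icc (-a) a, ‖y t‖ ≤ R) :
    ∃ y : ℝ → E, y 0 = x₀ ∧ ∀ t, HasDerivAt y (F (y t)) t := by
  have : CompleteSpace E := FiniteDimensional.complete ℝ E
  have key : ∀ a : ℝ, ∃ y : ℝ → E, y 0 = x₀ ∧
      ∀ t ∈ Ioo (-a) a, HasDerivAt y (F (y t)) t := by
    intro a
    rcases le_or_gt a 0 with ha | ha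
    · refine ⟨fun _ => x₀, rfl, fun t ht => ?_⟩
      exact absurd (ht.1.trans ht.2) (by linarith)
    obtain ⟨R, hR⟩ := hbound a ha
    let χ : ContDiffBump (0 : E) :=
      ⟨|R| + 1, |R| + 2, by positivity, by linarith⟩
    have hG : ContDiff ℝ 1 (fun x => χ x • F x) := χ.contDiff.smul hF
    have hGs : HasCompactSupport (fun x => χ x • F x) := χ.hasCompactSupport.smul_right
    obtain ⟨K, hK⟩ := hG.lipschitzWith_of_hasCompactSupport hGs one_ne_zero
    obtain ⟨L, hL⟩ := hGs.exists_bound_of_continuous hG.continuous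
    have hL0 : 0 ≤ L := (norm_nonneg _).trans (hL 0)
    have hpl : IsPicardLindelof (fun _ x => χ x • F x)
        (⟨0, by constructor <;> linarith⟩ : Icc (-a) a) x₀
        (⟨L * a, by positivity⟩ : NNReal) 0 ⟨L, hL0⟩ K :=
      IsPicardLindelof.of_time_independent (fun x _ => hL x) hK.lipschitzOnWith
        (by simp only [sub_zero, zero_sub, neg_neg, max_self, NNReal.coe_zero]; exact le_rfl)
    obtain ⟨y, hy0, hy⟩ := hpl.exists_eq_forall_mem_Icc_hasDerivWithinAt₀
    refine ⟨y, hy0, fun t ht => ?_⟩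
    have h1 := hy t (Ioo_subset_Icc_self ht)
    have h2 := hR χ (fun _ => χ.nonneg) (fun _ => χ.le_one) y hy0 hy t (Ioo_subset_Icc_self ht)
    have h3 : χ (y t) = 1 := χ.one_of_mem_closedBall (by
      rw [mem_closedBall, dist_zero_right]
      exact h2.trans ((le_abs_self R).trans (by simp [χ])))
    simp only [h3, one_smul] at h1
    exact h1.hasDerivAt (Icc_mem_nhds ht.1 ht.2)
  have hFM := (contMDiff_vectorSpace_iff_contDiff (𝕜 := ℝ) (V := F)).2 hF
  obtain ⟨y, hy0, hy⟩ := (exists_isMIntegralCurve_iff_exists_isMIntegralCurveOn_Ioo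
    (I := modelWithCornersSelf ℝ E) hFM x₀).2 (fun a => by
      obtain ⟨y, hy0, hy⟩ := key a
      exact ⟨y, hy0, fun t ht =>
        (hy t ht).hasFDerivAt.hasMFDerivAt.hasMFDerivWithinAt⟩)
  refine ⟨y, hy0, fun t => ?_⟩
  have h : HasFDerivAt y ((1 : ℝ →L[ℝ] ℝ).smulRight (F (y t))) t := (hy t).hasFDerivAt
  exact h.hasDerivAt.congr_deriv (by simp)

/-- The directional derivative `∑_{i ≥ 2} Hᵢ wᵢ` of `H` along the `x`-part of the velocity. -/
def geoS {n : ℕ} (H : V n → ℝ) (p w : V n) : ℝ :=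
  ∑ i : Fin (n+3), if 2 ≤ (i : ℕ) then Hd H i p * w i else 0

/-- The acceleration prescribed by the geodesic equations at position `p` and velocity `w`. -/
def geoAcc {n : ℕ} (H : V n → ℝ) (p w : V n) : V n := fun i =>
  if i = 0 then
    (1/2) * (2 * w 0 + w 1 * H p) * H p * geoS H p w - (1/2) * geoS H p w * w 1
      - (1/2) * Hd H 1 p * (w 1)^2
  else if i = 1 then -(2 * w 0 + w 1 * H p) * geoS H p w
  else (1/2) * (2 * w 0 + w 1 * H p) * Hd H i p * w 1

/-- The geodesic vector field on the phase space of pairs (position, velocity). -/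
def geoField {n : ℕ} (H : V n → ℝ) (y : V n × V n) : V n × V n := (y.2, geoAcc H y.1 y.2)

lemma geoAcc_zero {n : ℕ} (H : V n → ℝ) (p w : V n) : geoAcc H p w 0 =
    (1/2) * (2 * w 0 + w 1 * H p) * H p * geoS H p w - (1/2) * geoS H p w * w 1
      - (1/2) * Hd H 1 p * (w 1)^2 := by
  simp [geoAcc]

lemma geoAcc_one {n : ℕ} (H : V n → ℝ) (p w : V n) : geoAcc H p w 1 =
    -(2 * w 0 + w 1 * H p) * geoS H p w := by
  simp [geoAcc]

lemma geoAcc_of_two_le {n : ℕ} (H : V n → ℝ) (p w : V n) {i : Fin (n+3)} (hi : 2 ≤ (i : ℕ)) :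
    geoAcc H p w i = (1/2) * (2 * w 0 + w 1 * H p) * Hd H i p * w 1 := by
  have h0 : i ≠ 0 := by rintro rfl; simp at hi
  have h1 : i ≠ 1 := by rintro rfl; simp at hi
  simp [geoAcc, h0, h1]

lemma contDiff_Hd {n : ℕ} {H : V n → ℝ} (hH : ContDiff ℝ (⊤ : ℕ∞) H) (i : Fin (n+3)) :
    ContDiff ℝ 1 (Hd H i) := by
  have h : ContDiff ℝ 1 (fderiv ℝ H) := hH.fderiv_right (by norm_cast)
  exact h.clm_apply contDiff_const

lemma contDiff_geoField {n : ℕ} {H : V n → ℝ} (hH : ContDiff ℝ (⊤ : ℕ∞) H) :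
    ContDiff ℝ 1 (geoField H) := by
  have hH1 : ContDiff ℝ 1 H := hH.of_le (by norm_cast)
  have hHp : ContDiff ℝ 1 (fun y : V n × V n => H y.1) := hH1.comp contDiff_fst
  have hHd : ∀ i, ContDiff ℝ 1 (fun y : V n × V n => Hd H i y.1) :=
    fun i => (contDiff_Hd hH i).comp contDiff_fst
  have hw : ∀ i, ContDiff ℝ 1 (fun y : V n × V n => y.2 i) :=
    fun i => (contDiff_apply ℝ ℝ i).comp contDiff_snd
  have hS : ContDiff ℝ 1 (fun y : V n × V n => geoS H y.1 y.2) := by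
    unfold geoS
    refine ContDiff.sum fun i _ => ?_
    split_ifs
    · exact (hHd i).mul (hw i)
    · exact contDiff_const
  refine contDiff_snd.prodMk (contDiff_pi.2 fun i => ?_)
  have h0 := hw 0
  have h1 := hw 1
  have hi := hHd i
  have hu := hHd 1
  unfold geoAcc
  split_ifs <;> fun_prop

lemma Hd_zero {n : ℕ} {H : V n → ℝ} (hH : ContDiff ℝ (⊤ : ℕ∞) H) (hHv : VIndep H) (p : V n) :
    Hd H 0 p = 0 := by
  have hd : HasFDerivAt H (fderiv ℝ H p) p :=
    (hH.differentiable (by simp) p).hasFDerivAt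
  have h1 : HasDerivAt (fun s : ℝ => Function.update p 0 s) (Pi.single 0 1 : V n) (p 0) :=
    hasDerivAt_update p 0 (p 0)
  have hd' : HasFDerivAt H (fderiv ℝ H p) (Function.update p 0 (p 0)) := by
    rwa [Function.update_eq_self]
  have h2 := hd'.comp_hasDerivAt (p 0) h1
  have h3 : (H ∘ fun s : ℝ => Function.update p 0 s) = fun _ => H p := funext fun s => hHv p s
  rw [h3] at h2
  exact h2.unique (hasDerivAt_const _ _)

/-- The chain rule for `H`, with the `v`-direction dropped. -/
lemma fderiv_eq_geoS {n : ℕ} {H : V n → ℝ} (hH : ContDiff ℝ (⊤ : ℕ∞) H) (hHv : VIndep H)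
    (p w : V n) : fderiv ℝ H p w = Hd H 1 p * w 1 + geoS H p w := by
  have h : w = ∑ i, w i • (ee i : V n) := by
    ext j
    simp [ee, Finset.sum_apply, Pi.single_apply]
  have h2 : fderiv ℝ H p w = ∑ i, Hd H i p * w i := by
    conv_lhs => rw [h, map_sum]
    exact Finset.sum_congr rfl fun i _ => by rw [map_smul, smul_eq_mul, mul_comm]; rfl
  rw [h2]
  simp only [geoS, Fin.sum_univ_succ (n := n + 2), Fin.sum_univ_succ (n := n + 1),
    Hd_zero hH hHv]
  simp

/-- The a priori bound: along `y' = χ(y) F(y)` the two first integrals confine `y` to a ball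
whose radius depends only on the initial point and the length of the time interval. -/
lemma geo_bound {n : ℕ} {H : V n → ℝ} (hH : ContDiff ℝ (⊤ : ℕ∞) H) (hHv : VIndep H)
    (x₀ : V n × V n) (a : ℝ) (ha : 0 < a) :
    ∃ R : ℝ, ∀ χ : V n × V n → ℝ, (∀ x, 0 ≤ χ x) → (∀ x, χ x ≤ 1) →
      ∀ y : ℝ → V n × V n, y 0 = x₀ →
        (∀ t ∈ Icc (-a) a, HasDerivWithinAt y (χ (y t) • geoField H (y t)) (Icc (-a) a) t) →
        ∀ t ∈ Icc (-a) a, ‖y t‖ ≤ R := by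
  set e : V n → ℝ := fun w => (w 1)^2 / 2 +
    ∑ i : Fin (n+3), if 2 ≤ (i : ℕ) then (w i)^2 else 0 with he
  set c₀ : ℝ := 2 * x₀.2 0 + x₀.2 1 * H x₀.1
  set K : ℝ := √(2 * e x₀.2)
  set R₁ : ℝ := ‖x₀.1‖ + K * a
  have hK0 : 0 ≤ K := Real.sqrt_nonneg _
  have hR1 : 0 ≤ R₁ := by positivity
  obtain ⟨M, hM⟩ := (isCompact_closedBall (0 : V n) R₁).exists_bound_of_continuousOn
    hH.continuous.continuousOn
  have hM0 : 0 ≤ M := (norm_nonneg _).trans (hM 0 (by simpa using hR1))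
  set K' : ℝ := (|c₀| + K * M) / 2 with hK'
  have hK'0 : 0 ≤ K' := by positivity
  refine ⟨(‖x₀.1‖ + K * a) + (‖x₀.1‖ + K' * a) + K + K', fun χ hχ0 hχ1 y hy0 hy => ?_⟩
  have h0mem : (0 : ℝ) ∈ Icc (-a) a := ⟨by linarith, ha.le⟩
  have hconv : Convex ℝ (Icc (-a) a) := convex_Icc _ _
  have hp : ∀ i, ∀ t ∈ Icc (-a) a,
      HasDerivWithinAt (fun s => (y s).1 i) (χ (y t) * (y t).2 i) (Icc (-a) a) t :=
    fun i t ht => hasDerivWithinAt_pi.1 (hy t ht).fst i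
  have hw : ∀ i, ∀ t ∈ Icc (-a) a, HasDerivWithinAt (fun s => (y s).2 i)
      (χ (y t) * geoAcc H (y t).1 (y t).2 i) (Icc (-a) a) t :=
    fun i t ht => hasDerivWithinAt_pi.1 (hy t ht).snd i
  have hconst : ∀ f : ℝ → ℝ, (∀ t ∈ Icc (-a) a, HasDerivWithinAt f 0 (Icc (-a) a) t) →
      ∀ t ∈ Icc (-a) a, f t = f 0 := by
    intro f hf t ht
    have := hconv.norm_image_sub_le_of_norm_hasDerivWithin_le (C := 0) hf (by simp) h0mem ht
    rw [zero_mul, norm_le_zero_iff, sub_eq_zero] at this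
    exact this
  -- conservation of the momentum of `∂_v`
  have hc : ∀ t ∈ Icc (-a) a, 2 * (y t).2 0 + (y t).2 1 * H (y t).1 = c₀ := by
    intro t ht
    rw [hconst (fun s => 2 * (y s).2 0 + (y s).2 1 * H (y s).1) (fun t ht => ?_) t ht, hy0]
    have hHy : HasDerivWithinAt (fun s => H (y s).1)
        (fderiv ℝ H (y t).1 (χ (y t) • (y t).2)) (Icc (-a) a) t :=
      (hH.differentiable (by simp) (y t).1).hasFDerivAt.comp_hasDerivWithinAt t (hy t ht).fst
    refine (((hw 0 t ht).const_mul 2).add ((hw 1 t ht).mul hHy)).congr_deriv ?_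
    rw [map_smul, fderiv_eq_geoS hH hHv, geoAcc_zero, geoAcc_one, smul_eq_mul]
    ring
  -- conservation of the energy
  have hE : ∀ t ∈ Icc (-a) a, e (y t).2 = e x₀.2 := by
    intro t ht
    rw [hconst (fun s => e (y s).2) (fun t ht => ?_) t ht, hy0]
    have hsum : HasDerivWithinAt
        (fun s => ∑ i : Fin (n+3), if 2 ≤ (i : ℕ) then ((y s).2 i)^2 else 0)
        (∑ i : Fin (n+3), χ (y t) * (2 * (y t).2 0 + (y t).2 1 * H (y t).1) * (y t).2 1 *
          (if 2 ≤ (i : ℕ) then Hd H i (y t).1 * (y t).2 i else 0)) (Icc (-a) a) t := by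
      refine HasDerivWithinAt.fun_sum fun i _ => ?_
      split_ifs with hi
      · refine ((hw i t ht).pow 2).congr_deriv ?_
        rw [geoAcc_of_two_le H _ _ hi]
        norm_num
        ring
      · simpa using hasDerivWithinAt_const t (Icc (-a) a) (0 : ℝ)
    refine ((((hw 1 t ht).pow 2).div_const 2).add hsum).congr_deriv ?_
    rw [← Finset.mul_sum, geoAcc_one]
    change _ + _ * geoS H (y t).1 (y t).2 = 0
    norm_num
    ring
  have hwK : ∀ i : Fin (n+3), i ≠ 0 → ∀ t ∈ Icc (-a) a, |(y t).2 i| ≤ K := by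
    intro i hi t ht
    refine Real.abs_le_sqrt ?_
    rw [← hE t ht]
    have hnn : ∀ j ∈ Finset.univ, 0 ≤ (if 2 ≤ ((j : Fin (n+3)) : ℕ) then ((y t).2 j)^2 else 0) := by
      intro j _
      split_ifs <;> positivity
    have hs0 := Finset.sum_nonneg hnn
    simp only [he]
    by_cases h1 : i = 1
    · subst h1
      linarith
    · have h2 : 2 ≤ (i : ℕ) := by
        have h0' : (i : ℕ) ≠ 0 := fun h => hi (Fin.ext (by simpa using h))
        have h1' : (i : ℕ) ≠ 1 := fun h => h1 (Fin.ext (by simpa using h))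
        omega
      have := Finset.single_le_sum hnn (Finset.mem_univ i)
      rw [if_pos h2] at this
      nlinarith [sq_nonneg ((y t).2 1), sq_nonneg ((y t).2 i)]
  have hpos : ∀ (i : Fin (n+3)) (C : ℝ), 0 ≤ C → (∀ t ∈ Icc (-a) a, |(y t).2 i| ≤ C) →
      ∀ t ∈ Icc (-a) a, |(y t).1 i| ≤ ‖x₀.1‖ + C * a := by
    intro i C hC hb t ht
    have h1 := hconv.norm_image_sub_le_of_norm_hasDerivWithin_le (C := C) (hp i) (fun s hs => by
      rw [norm_mul, Real.norm_eq_abs, Real.norm_eq_abs, abs_of_nonneg (hχ0 _)]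
      exact (mul_le_of_le_one_left (abs_nonneg _) (hχ1 _)).trans (hb s hs)) h0mem ht
    rw [sub_zero, hy0, Real.norm_eq_abs, Real.norm_eq_abs] at h1
    have h2 : |t| ≤ a := abs_le.2 ht
    have h3 : |x₀.1 i| ≤ ‖x₀.1‖ := norm_le_pi_norm x₀.1 i
    have h4 := abs_sub_abs_le_abs_sub ((y t).1 i) (x₀.1 i)
    have h5 := mul_le_mul_of_nonneg_left h2 hC
    linarith
  have hHM : ∀ t ∈ Icc (-a) a, |H (y t).1| ≤ M := by
    intro t ht
    -- `H` may be evaluated at `v = 0`, where the position is already known to be bounded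
    rw [← hHv (y t).1 0]
    refine hM _ ?_
    rw [mem_closedBall, dist_zero_right, pi_norm_le_iff_of_nonneg hR1]
    intro i
    by_cases hi : i = 0
    · subst hi
      simpa using hR1
    · rw [Function.update_of_ne hi]
      exact hpos i K hK0 (hwK i hi) t ht
  have hw0 : ∀ t ∈ Icc (-a) a, |(y t).2 0| ≤ K' := by
    intro t ht
    have h1 : (y t).2 0 = (c₀ - (y t).2 1 * H (y t).1) / 2 := by
      rw [← hc t ht]; ring
    rw [h1, abs_div, abs_two, hK']
    have h2 := abs_sub c₀ ((y t).2 1 * H (y t).1)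
    have h3 : |(y t).2 1 * H (y t).1| ≤ K * M := by
      rw [abs_mul]
      exact mul_le_mul (hwK 1 (by simp) t ht) (hHM t ht) (abs_nonneg _) hK0
    linarith
  intro t ht
  have hA : 0 ≤ K' * a := by positivity
  have hB : 0 ≤ K * a := by positivity
  have hN := norm_nonneg x₀.1
  rw [Prod.norm_def]
  refine max_le ((pi_norm_le_iff_of_nonneg (by positivity)).2 fun i => ?_)
    ((pi_norm_le_iff_of_nonneg (by positivity)).2 fun i => ?_)
  · rw [Real.norm_eq_abs]
    by_cases hi : i = 0
    · subst hi
      linarith [hpos 0 K' hK'0 hw0 t ht]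
    · linarith [hpos i K hK0 (hwK i hi) t ht]
  · rw [Real.norm_eq_abs]
    by_cases hi : i = 0
    · subst hi
      linarith [hw0 t ht]
    · linarith [hwK i hi t ht]

/-- For every initial time, position and velocity there is a globally
defined twice continuously differentiable solution of the geodesic system with that initial
data: the standard Riemannian dual metric is geodesically complete, for any smooth `H`. -/
theorem stmt_11 (n : ℕ) (H : V n → ℝ) (hH : ContDiff ℝ (⊤ : ℕ∞) H) (hHv : VIndep H) :
    ∀ (t₀ : ℝ) (p₀ w₀ : V n),
      ∃ γ γ' γ'' : ℝ → V n,
        (∀ t, HasDerivAt γ (γ' t) t) ∧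
        (∀ t, HasDerivAt γ' (γ'' t) t) ∧
        Continuous γ'' ∧
        (∀ t, geo n H γ γ' γ'' t) ∧
        γ t₀ = p₀ ∧ γ' t₀ = w₀ := by
  intro t₀ p₀ w₀
  have hF := contDiff_geoField hH
  obtain ⟨z, hz0, hz⟩ := exists_global_of_cutoff_bound hF (p₀, w₀) (geo_bound hH hHv (p₀, w₀))
  -- the field is autonomous, so the initial time can be moved from `0` to `t₀`
  have hy : ∀ t, HasDerivAt (fun s => z (s - t₀)) (geoField H (z (t - t₀))) t :=
    fun t => (hz (t - t₀)).comp_sub_const t t₀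
  have hcont : Continuous (fun s => z (s - t₀)) :=
    continuous_iff_continuousAt.2 fun t => (hy t).continuousAt
  refine ⟨fun t => (z (t - t₀)).1, fun t => (z (t - t₀)).2,
    fun t => geoAcc H (z (t - t₀)).1 (z (t - t₀)).2, fun t => (hy t).fst, fun t => (hy t).snd,
    continuous_snd.comp (hF.continuous.comp hcont), fun t => ?_, by simp [hz0], by simp [hz0]⟩
  exact ⟨geoAcc_zero H _ _, geoAcc_one H _ _, fun i hi => geoAcc_of_two_le H _ _ hi⟩
end
end

section
/- For every p ∈ ℝⁿ and all i, j ∈ {3, …, n}, the Ricci tensor of the standard Riemannian dual metric in the orthonormal frame is: Ric(T,T)(p) = (1/2)Σ_{i=3}^n H_{ii}(p); Ric(Z,Z)(p) = −(1/2)Σ_{i=3}^n H_{ii}(p); Ric(T,Z)(p) = −(1/2)Σ_{i=3}^n H_i(p)²; Ric(X_i,X_j)(p) = −(1/2)H_i(p)H_j(p); Ric(T,X_i)(p) = (1/2)H_{ui}(p); and Ric(Z,X_i)(p) = −(1/2)H_{ui}(p). -/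
/-!
The computation is done in the orthonormal frame `T, Z, X_i`, where the connection is very sparse.
With `W = Σ H_i X_i` one finds
`∇_T T = W/2`, `∇_Z Z = -W/2`, `∇_T Z = ∇_Z T = 0`, `∇_{X_i} X_j = 0`,
`∇_T X_i = -H_i T/2`, `∇_Z X_i = H_i Z/2`, `∇_{X_i} T = -H_i Z/2`, `∇_{X_i} Z = H_i T/2`,
with brackets `[T,Z] = 0` and `[X_i,T] = [X_i,Z] = H_i (T - Z)/2`.
These are identities of vector fields, so a second covariant derivative follows from the Leibniz
rule (`nab_smul`) and the coordinates of `∇_w W`; the Ricci tensor is then read off componentwise.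
The hypothesis that `H` does not depend on `v` enters through `H_v = 0` and `H_{vi} = 0`.
-/

noncomputable section

/-- The Lie bracket of vector fields on ℝⁿ. -/
def br {n : ℕ} (a b : V n → V n) (p : V n) : V n :=
  fderiv ℝ b p (a p) - fderiv ℝ a p (b p)

/-- The Christoffel symbols of `g`, as a symmetric bilinear map `Γ_p : ℝⁿ × ℝⁿ → ℝⁿ`.
Its only nonzero components (indices `v = 0`, `u = 1`, `i = 2, …, n+2`) are
`Γ^u_{vi} = H_i`, `Γ^i_{vu} = −H_i/2`, `Γ^v_{vi} = −(1/2)H·H_i`, `Γ^i_{uu} = −(1/2)H·H_i`,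
`Γ^u_{ui} = (1/2)H·H_i`, `Γ^v_{uu} = (1/2)H_u`, `Γ^v_{ui} = −(1/4)(H²−1)H_i`,
together with their symmetric counterparts. -/
def Ga {n : ℕ} (H : V n → ℝ) (p : V n) (a b : V n) : V n := fun j =>
  if (j : ℕ) = 0 then
    (∑ i : Fin (n+3),
        if 2 ≤ (i : ℕ) then (-(1/2) * H p * Hd H i p) * (a 0 * b i + a i * b 0) else 0)
      + ((1/2) * Hd H 1 p) * (a 1 * b 1)
      + (∑ i : Fin (n+3),
          if 2 ≤ (i : ℕ) then (-(1/4) * ((H p)^2 - 1) * Hd H i p) * (a 1 * b i + a i * b 1)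
          else 0)
  else if (j : ℕ) = 1 then
    (∑ i : Fin (n+3), if 2 ≤ (i : ℕ) then (Hd H i p) * (a 0 * b i + a i * b 0) else 0)
      + (∑ i : Fin (n+3),
          if 2 ≤ (i : ℕ) then ((1/2) * H p * Hd H i p) * (a 1 * b i + a i * b 1) else 0)
  else
    (-(1/2) * Hd H j p) * (a 0 * b 1 + a 1 * b 0) + (-(1/2) * H p * Hd H j p) * (a 1 * b 1)

/-- The connection `(∇_a b)(p) = (Db)_p(a(p)) + Γ_p(a(p), b(p))`. -/
def cd {n : ℕ} (H : V n → ℝ) (a b : V n → V n) (p : V n) : V n :=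
  fderiv ℝ b p (a p) + Ga H p (a p) (b p)

/-- The curvature `R(a,b)c = ∇_a ∇_b c − ∇_b ∇_a c − ∇_{[a,b]} c`. -/
def Rcurv {n : ℕ} (H : V n → ℝ) (a b c : V n → V n) (p : V n) : V n :=
  cd H a (cd H b c) p - cd H b (cd H a c) p - cd H (br a b) c p

/-- The Ricci tensor, computed as a trace over the orthonormal frame `T, X_i, Z`. -/
def Ric {n : ℕ} (H : V n → ℝ) (a b : V n → V n) (p : V n) : ℝ :=
  gg H p (Rcurv H (TT H) a b p) (TT H p)
    + (∑ i : Fin (n+3),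
        if 2 ≤ (i : ℕ) then gg H p (Rcurv H (XX i) a b p) (ee i) else 0)
    + gg H p (Rcurv H (ZZ H) a b p) (ZZ H p)

/-- Second partial derivative `∂ᵢ∂ⱼH`. -/
def Hd2 {n : ℕ} (H : V n → ℝ) (i j : Fin (n+3)) (p : V n) : ℝ :=
  fderiv ℝ (fun q => Hd H j q) p (ee i)

/-- The covariant derivative at `p` of the field `b` in the direction of the vector `w`. -/
def nab {n : ℕ} (H : V n → ℝ) (p w : V n) (b : V n → V n) : V n :=
  fderiv ℝ b p w + Ga H p w (b p)

/-- The field `W = Σ H_i X_i`, the gradient of `H` in the `xⁱ` directions. -/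
def WW {n : ℕ} (H : V n → ℝ) (p : V n) : V n := fun j => if 2 ≤ (j : ℕ) then Hd H j p else 0

/-! ### Coordinates, Christoffel symbols and metric in the frame -/

section Frame

variable {n : ℕ} {H : V n → ℝ}

lemma Rcurv_eq_nab (a b c : V n → V n) (p : V n) :
    Rcurv H a b c p
      = nab H p (a p) (cd H b c) - nab H p (b p) (cd H a c) - nab H p (br a b p) c := rfl

lemma fin_cases3 (j : Fin (n+3)) : j = 0 ∨ j = 1 ∨ 2 ≤ (j : ℕ) := by
  rcases j with ⟨j, hj⟩
  rcases j with _ | _ | j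
  · left; rfl
  · right; left; rfl
  · right; right; simp

lemma ee_ne {i j : Fin (n+3)} (h : (j : ℕ) ≠ i) : (ee i : V n) j = 0 := by
  have : j ≠ i := fun e => h (by rw [e])
  simp [ee, this]

lemma ee_self (i : Fin (n+3)) : (ee i : V n) i = 1 := by simp [ee]

lemma ee_zero_ge {j : Fin (n+3)} (h : 2 ≤ (j : ℕ)) : (ee 0 : V n) j = 0 :=
  ee_ne (by rw [Fin.val_zero]; omega)

lemma TT_zero (p : V n) : TT H p 0 = (H p + 1) / 2 := by simp [TT, ee]

lemma TT_one (p : V n) : TT H p 1 = -1 := by simp [TT, ee]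

lemma TT_ge (p : V n) {j : Fin (n+3)} (h : 2 ≤ (j : ℕ)) : TT H p j = 0 := by
  have h0 : (ee 0 : V n) j = 0 := ee_zero_ge h
  have h1 : (ee 1 : V n) j = 0 := ee_ne (by simp; omega)
  simp [TT, h0, h1]

lemma ZZ_zero (p : V n) : ZZ H p 0 = (H p - 1) / 2 := by simp [ZZ, ee]

lemma ZZ_one (p : V n) : ZZ H p 1 = -1 := by simp [ZZ, ee]

lemma ZZ_ge (p : V n) {j : Fin (n+3)} (h : 2 ≤ (j : ℕ)) : ZZ H p j = 0 := by
  have h0 : (ee 0 : V n) j = 0 := ee_zero_ge h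
  have h1 : (ee 1 : V n) j = 0 := ee_ne (by simp; omega)
  simp [ZZ, h0, h1]

lemma ee_zero {i : Fin (n+3)} (h : 2 ≤ (i : ℕ)) : (ee i : V n) 0 = 0 := ee_ne (by simp; omega)

lemma ee_one {i : Fin (n+3)} (h : 2 ≤ (i : ℕ)) : (ee i : V n) 1 = 0 := ee_ne (by simp; omega)

lemma WW_zero (p : V n) : WW H p 0 = 0 := by simp [WW]

lemma WW_one (p : V n) : WW H p 1 = 0 := by simp [WW]

lemma WW_ge (p : V n) {j : Fin (n+3)} (h : 2 ≤ (j : ℕ)) : WW H p j = Hd H j p := by simp [WW, h]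

/-- `Σ_i H_i a_i` over the indices `i ≥ 2`. -/
def dotH (H : V n → ℝ) (p a : V n) : ℝ :=
  ∑ i : Fin (n+3), if 2 ≤ (i : ℕ) then Hd H i p * a i else 0

lemma sum_sym (p a b : V n) (c s t : ℝ) :
    (∑ i : Fin (n+3), if 2 ≤ (i : ℕ) then (c * Hd H i p) * (s * b i + a i * t) else 0)
      = c * (s * dotH H p b + t * dotH H p a) := by
  simp only [dotH, Finset.mul_sum, ← Finset.sum_add_distrib]
  refine Finset.sum_congr rfl fun i _ => ?_
  split_ifs <;> ring

lemma dotH_of_zero (p : V n) {a : V n} (h : ∀ j : Fin (n+3), 2 ≤ (j : ℕ) → a j = 0) :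
    dotH H p a = 0 := by
  refine Finset.sum_eq_zero fun i _ => ?_
  split_ifs with hi
  · simp [h i hi]
  · rfl

lemma dotH_TT (p : V n) : dotH H p (TT H p) = 0 := dotH_of_zero p fun _ h => TT_ge p h

lemma dotH_ZZ (p : V n) : dotH H p (ZZ H p) = 0 := dotH_of_zero p fun _ h => ZZ_ge p h

lemma dotH_ee (p : V n) {i : Fin (n+3)} (h : 2 ≤ (i : ℕ)) : dotH H p (ee i) = Hd H i p := by
  rw [dotH, Finset.sum_eq_single i]
  · simp [h, ee_self]
  · intro j _ hj
    rw [ee_ne (fun e => hj (Fin.ext e))]; simp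
  · simp

lemma dotH_WW (p : V n) :
    dotH H p (WW H p) = ∑ i : Fin (n+3), if 2 ≤ (i : ℕ) then (Hd H i p)^2 else 0 := by
  refine Finset.sum_congr rfl fun i _ => ?_
  split_ifs with hi
  · rw [WW_ge p hi]; ring
  · rfl

lemma Ga_zero (p a b : V n) : Ga H p a b 0
    = -(1/2) * H p * (a 0 * dotH H p b + b 0 * dotH H p a) + (1/2) * Hd H 1 p * (a 1 * b 1)
      + -(1/4) * ((H p)^2 - 1) * (a 1 * dotH H p b + b 1 * dotH H p a) := by
  simp only [Ga, sum_sym]; simp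

lemma Ga_one (p a b : V n) : Ga H p a b 1
    = (a 0 * dotH H p b + b 0 * dotH H p a)
      + (1/2) * H p * (a 1 * dotH H p b + b 1 * dotH H p a) := by
  have h := sum_sym (H := H) p a b 1 (a 0) (b 0)
  simp only [one_mul] at h
  simp only [Ga, sum_sym, h]; simp

lemma Ga_ge (p a b : V n) {j : Fin (n+3)} (h : 2 ≤ (j : ℕ)) : Ga H p a b j
    = (-(1/2) * Hd H j p) * (a 0 * b 1 + a 1 * b 0) + (-(1/2) * H p * Hd H j p) * (a 1 * b 1) := by
  have h0 : (j : ℕ) ≠ 0 := by omega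
  have h1 : (j : ℕ) ≠ 1 := by omega
  simp only [Ga, h0, h1, if_false]

lemma dotH_add (p a b : V n) : dotH H p (a + b) = dotH H p a + dotH H p b := by
  simp only [dotH, ← Finset.sum_add_distrib]
  refine Finset.sum_congr rfl fun i _ => ?_
  split_ifs <;> simp; ring

lemma dotH_smul (p a : V n) (c : ℝ) : dotH H p (c • a) = c * dotH H p a := by
  simp only [dotH, Finset.mul_sum]
  refine Finset.sum_congr rfl fun i _ => ?_
  split_ifs <;> simp; ring

lemma Ga_add_left (p a a' b : V n) : Ga H p (a + a') b = Ga H p a b + Ga H p a' b := by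
  ext j
  rcases fin_cases3 j with rfl | rfl | h
  · simp only [Pi.add_apply, Ga_zero, dotH_add]; ring
  · simp only [Pi.add_apply, Ga_one, dotH_add]; ring
  · simp only [Pi.add_apply, Ga_ge _ _ _ h]; ring

lemma Ga_smul_left (p a b : V n) (c : ℝ) : Ga H p (c • a) b = c • Ga H p a b := by
  ext j
  rcases fin_cases3 j with rfl | rfl | h
  · simp only [Pi.smul_apply, smul_eq_mul, Ga_zero, dotH_smul]; ring
  · simp only [Pi.smul_apply, smul_eq_mul, Ga_one, dotH_smul]; ring
  · simp only [Pi.smul_apply, smul_eq_mul, Ga_ge _ _ _ h]; ring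

lemma Ga_smul_right (p a b : V n) (c : ℝ) : Ga H p a (c • b) = c • Ga H p a b := by
  ext j
  rcases fin_cases3 j with rfl | rfl | h
  · simp only [Pi.smul_apply, smul_eq_mul, Ga_zero, dotH_smul]; ring
  · simp only [Pi.smul_apply, smul_eq_mul, Ga_one, dotH_smul]; ring
  · simp only [Pi.smul_apply, smul_eq_mul, Ga_ge _ _ _ h]; ring

lemma nab_add_left (p a a' : V n) (b : V n → V n) :
    nab H p (a + a') b = nab H p a b + nab H p a' b := by
  simp only [nab, Ga_add_left, map_add]; abel

lemma nab_smul_left (p a : V n) (c : ℝ) (b : V n → V n) :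
    nab H p (c • a) b = c • nab H p a b := by
  simp only [nab, Ga_smul_left, map_smul, smul_add]

lemma nab_zero (p w : V n) : nab H p w (fun _ => 0) = 0 := by
  have h := Ga_smul_right (H := H) p w 0 0
  simp only [zero_smul] at h
  simp [nab, h]

/-- Leibniz rule for the covariant derivative. -/
lemma nab_smul (p w : V n) {f : V n → ℝ} {b : V n → V n} (hf : DifferentiableAt ℝ f p)
    (hb : DifferentiableAt ℝ b p) :
    nab H p w (fun q => f q • b q) = fderiv ℝ f p w • b p + f p • nab H p w b := by
  have h : fderiv ℝ (fun q => f q • b q) p = _ := fderiv_fun_smul hf hb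
  simp only [nab, h, Ga_smul_right]
  simp only [_root_.add_apply, _root_.smul_apply,
    ContinuousLinearMap.smulRight_apply, smul_add]
  abel

lemma gg_sum_zero (a b : V n) (h : ∀ j : Fin (n+3), 2 ≤ (j : ℕ) → b j = 0) :
    (∑ i : Fin (n+3), if 2 ≤ (i : ℕ) then a i * b i else 0) = 0 := by
  refine Finset.sum_eq_zero fun i _ => ?_
  split_ifs with hi
  · simp [h i hi]
  · rfl

lemma gg_TT (p a : V n) : gg H p a (TT H p) = a 0 + a 1 * (H p - 1) / 2 := by
  rw [gg, gg_sum_zero _ _ fun _ h => TT_ge p h, TT_zero, TT_one]; ring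

lemma gg_ZZ (p a : V n) : gg H p a (ZZ H p) = -a 0 - a 1 * (H p + 1) / 2 := by
  rw [gg, gg_sum_zero _ _ fun _ h => ZZ_ge p h, ZZ_zero, ZZ_one]; ring

lemma gg_ee (p a : V n) {i : Fin (n+3)} (h : 2 ≤ (i : ℕ)) : gg H p a (ee i) = a i := by
  rw [gg, ee_zero h, ee_one h, Finset.sum_eq_single i]
  · simp [h, ee_self]
  · intro j _ hj
    rw [ee_ne (fun e => hj (Fin.ext e))]; simp
  · simp

/-! ### Derivatives of `H` and of the frame -/

lemma Hd_v (hd : Differentiable ℝ H) (hHv : VIndep H) (p : V n) : Hd H 0 p = 0 := by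
  have h1 : HasDerivAt (fun t : ℝ => p + t • (ee 0 : V n)) (ee 0) 0 := by
    simpa using ((hasDerivAt_id (0:ℝ)).smul_const (ee 0 : V n)).const_add p
  have h2 : HasDerivAt (fun t : ℝ => H (p + t • (ee 0 : V n))) (fderiv ℝ H p (ee 0)) 0 := by
    have h3 : HasFDerivAt H (fderiv ℝ H p) (p + (0:ℝ) • (ee 0 : V n)) := by
      simpa using (hd p).hasFDerivAt
    exact h3.comp_hasDerivAt (0:ℝ) h1
  have h4 : (fun t : ℝ => H (p + t • (ee 0 : V n))) = fun _ => H p := by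
    funext t
    rw [← hHv p (p 0 + t)]
    congr 1
    ext j
    by_cases hj : j = 0
    · subst hj; simp [ee]
    · simp [ee, hj]
  rw [h4] at h2
  exact h2.unique (hasDerivAt_const _ _)

lemma VIndep_Hd (hHv : VIndep H) (i : Fin (n+3)) :
    VIndep (Hd H i) := by
  intro p c
  have hs : (fun q : V n => H (q + (c - p 0) • (ee 0 : V n))) = H := by
    funext q
    rw [← hHv q (q 0 + (c - p 0))]
    congr 1
    ext j
    by_cases hj : j = 0
    · subst hj; simp [ee]
    · simp [ee, hj]
  have hp : Function.update p 0 c = p + (c - p 0) • (ee 0 : V n) := by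
    ext j
    by_cases hj : j = 0
    · subst hj; simp [ee]
    · simp [ee, hj]
  unfold Hd
  rw [hp, ← fderiv_comp_add_right, hs]

lemma differentiable_Hd (hH : ContDiff ℝ (⊤ : ℕ∞) H) (i : Fin (n+3)) :
    Differentiable ℝ (Hd H i) := by
  have h : ContDiff ℝ 1 (fderiv ℝ H) := hH.fderiv_right (by norm_cast)
  exact (h.differentiable one_ne_zero).clm_apply (differentiable_const _)

lemma differentiable_TT (hd : Differentiable ℝ H) : Differentiable ℝ (TT H) := by
  unfold TT; fun_prop

lemma differentiable_ZZ (hd : Differentiable ℝ H) : Differentiable ℝ (ZZ H) := by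
  unfold ZZ; fun_prop

lemma differentiable_WW (hH : ContDiff ℝ (⊤ : ℕ∞) H) : Differentiable ℝ (WW H) := by
  rw [differentiable_pi]
  intro j
  by_cases h : 2 ≤ (j : ℕ)
  · simpa [WW, h] using differentiable_Hd hH j
  · simp [WW, h]

lemma fderiv_TT (hd : Differentiable ℝ H) (p w : V n) :
    fderiv ℝ (TT H) p w = (fderiv ℝ H p w / 2) • ee 0 := by
  have h : HasFDerivAt (TT H) (((2:ℝ)⁻¹ • fderiv ℝ H p).smulRight (ee 0 : V n)) p := by
    have := ((((hd p).hasFDerivAt.add_const 1).const_smul (2:ℝ)⁻¹).smul_const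
      (ee 0 : V n)).sub_const (ee 1)
    refine this.congr_of_eventuallyEq (Filter.Eventually.of_forall fun q => ?_)
    simp [TT, div_eq_inv_mul]
  rw [h.fderiv]
  simp [div_eq_inv_mul]

lemma fderiv_ZZ (hd : Differentiable ℝ H) (p w : V n) :
    fderiv ℝ (ZZ H) p w = (fderiv ℝ H p w / 2) • ee 0 := by
  have h : HasFDerivAt (ZZ H) (((2:ℝ)⁻¹ • fderiv ℝ H p).smulRight (ee 0 : V n)) p := by
    have := ((((hd p).hasFDerivAt.sub_const 1).const_smul (2:ℝ)⁻¹).smul_const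
      (ee 0 : V n)).sub_const (ee 1)
    refine this.congr_of_eventuallyEq (Filter.Eventually.of_forall fun q => ?_)
    simp [ZZ, div_eq_inv_mul]
  rw [h.fderiv]
  simp [div_eq_inv_mul]

lemma fderiv_XX (i : Fin (n+3)) (p w : V n) : fderiv ℝ (XX i : V n → V n) p w = 0 := by
  have h : (XX i : V n → V n) = fun _ => ee i := rfl
  rw [h, fderiv_fun_const]; rfl

lemma fderiv_WW (hH : ContDiff ℝ (⊤ : ℕ∞) H) (p w : V n) (j : Fin (n+3)) :
    fderiv ℝ (WW H) p w j = if 2 ≤ (j : ℕ) then fderiv ℝ (Hd H j) p w else 0 := by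
  have h := fderiv_apply (𝕜 := ℝ) ((differentiable_WW hH) p) j
  have h' : fderiv ℝ (WW H) p w j = fderiv ℝ (fun q => WW H q j) p w := by
    rw [h]; rfl
  rw [h']
  by_cases hj : 2 ≤ (j : ℕ)
  · simp only [WW, hj, if_true]
  · simp [WW, hj]

/-- A function with vanishing `v`-derivative is differentiated along `T` as along `-∂_u`. -/
lemma fderiv_dir_TT {f : V n → ℝ} (p : V n) (hf : fderiv ℝ f p (ee 0) = 0) :
    fderiv ℝ f p (TT H p) = -fderiv ℝ f p (ee 1) := by
  simp [TT, hf]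

lemma fderiv_dir_ZZ {f : V n → ℝ} (p : V n) (hf : fderiv ℝ f p (ee 0) = 0) :
    fderiv ℝ f p (ZZ H p) = -fderiv ℝ f p (ee 1) := by
  simp [ZZ, hf]

/-! ### The connection in the frame -/

lemma cd_TT_TT (hd : Differentiable ℝ H) (hHv : VIndep H) :
    cd H (TT H) (TT H) = fun p => (1/2 : ℝ) • WW H p := by
  funext p; ext j
  have hu : fderiv ℝ H p (TT H p) = -Hd H 1 p := fderiv_dir_TT p (Hd_v hd hHv p)
  rcases fin_cases3 j with rfl | rfl | h
  · simp only [cd, fderiv_TT hd, hu, Pi.add_apply, Pi.smul_apply, smul_eq_mul, Ga_zero, dotH_TT,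
      TT_zero, TT_one, WW_zero, ee_self]; ring
  · simp only [cd, fderiv_TT hd, hu, Pi.add_apply, Pi.smul_apply, smul_eq_mul, Ga_one, dotH_TT,
      TT_zero, TT_one, WW_one, ee_ne (n := n) (i := 0) (j := 1) (by simp)]; ring
  · simp only [cd, fderiv_TT hd, hu, Pi.add_apply, Pi.smul_apply, smul_eq_mul, Ga_ge _ _ _ h,
      TT_zero, TT_one, WW_ge _ h, ee_zero_ge h]; ring

lemma cd_ZZ_ZZ (hd : Differentiable ℝ H) (hHv : VIndep H) :
    cd H (ZZ H) (ZZ H) = fun p => (-(1/2) : ℝ) • WW H p := by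
  funext p; ext j
  have hu : fderiv ℝ H p (ZZ H p) = -Hd H 1 p := fderiv_dir_ZZ p (Hd_v hd hHv p)
  rcases fin_cases3 j with rfl | rfl | h
  · simp only [cd, fderiv_ZZ hd, hu, Pi.add_apply, Pi.smul_apply, smul_eq_mul, Ga_zero, dotH_ZZ,
      ZZ_zero, ZZ_one, WW_zero, ee_self]; ring
  · simp only [cd, fderiv_ZZ hd, hu, Pi.add_apply, Pi.smul_apply, smul_eq_mul, Ga_one, dotH_ZZ,
      ZZ_zero, ZZ_one, WW_one, ee_ne (n := n) (i := 0) (j := 1) (by simp)]; ring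
  · simp only [cd, fderiv_ZZ hd, hu, Pi.add_apply, Pi.smul_apply, smul_eq_mul, Ga_ge _ _ _ h,
      ZZ_zero, ZZ_one, WW_ge _ h, ee_zero_ge h]; ring

lemma cd_TT_ZZ (hd : Differentiable ℝ H) (hHv : VIndep H) :
    cd H (TT H) (ZZ H) = fun _ => 0 := by
  funext p; ext j
  have hu : fderiv ℝ H p (TT H p) = -Hd H 1 p := fderiv_dir_TT p (Hd_v hd hHv p)
  rcases fin_cases3 j with rfl | rfl | h
  · simp only [cd, fderiv_ZZ hd, hu, Pi.add_apply, Pi.smul_apply, smul_eq_mul, Ga_zero, dotH_ZZ,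
      dotH_TT, TT_zero, TT_one, ZZ_zero, ZZ_one, Pi.zero_apply, ee_self]; ring
  · simp only [cd, fderiv_ZZ hd, hu, Pi.add_apply, Pi.smul_apply, smul_eq_mul, Ga_one, dotH_ZZ,
      dotH_TT, Pi.zero_apply, ee_ne (n := n) (i := 0) (j := 1) (by simp)]; ring
  · simp only [cd, fderiv_ZZ hd, hu, Pi.add_apply, Pi.smul_apply, smul_eq_mul, Ga_ge _ _ _ h,
      TT_zero, TT_one, ZZ_zero, ZZ_one, Pi.zero_apply,
      ee_zero_ge h]; ring

lemma cd_ZZ_TT (hd : Differentiable ℝ H) (hHv : VIndep H) :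
    cd H (ZZ H) (TT H) = fun _ => 0 := by
  funext p; ext j
  have hu : fderiv ℝ H p (ZZ H p) = -Hd H 1 p := fderiv_dir_ZZ p (Hd_v hd hHv p)
  rcases fin_cases3 j with rfl | rfl | h
  · simp only [cd, fderiv_TT hd, hu, Pi.add_apply, Pi.smul_apply, smul_eq_mul, Ga_zero, dotH_ZZ,
      dotH_TT, TT_zero, TT_one, ZZ_zero, ZZ_one, Pi.zero_apply, ee_self]; ring
  · simp only [cd, fderiv_TT hd, hu, Pi.add_apply, Pi.smul_apply, smul_eq_mul, Ga_one, dotH_ZZ,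
      dotH_TT, Pi.zero_apply, ee_ne (n := n) (i := 0) (j := 1) (by simp)]; ring
  · simp only [cd, fderiv_TT hd, hu, Pi.add_apply, Pi.smul_apply, smul_eq_mul, Ga_ge _ _ _ h,
      TT_zero, TT_one, ZZ_zero, ZZ_one, Pi.zero_apply,
      ee_zero_ge h]; ring

lemma cd_TT_XX {i : Fin (n+3)} (hi : 2 ≤ (i : ℕ)) :
    cd H (TT H) (XX i) = fun p => (-(1/2) * Hd H i p) • TT H p := by
  funext p; ext j
  rcases fin_cases3 j with rfl | rfl | h
  · simp only [cd, fderiv_XX, Pi.add_apply, Pi.smul_apply, smul_eq_mul, Ga_zero, dotH_TT, XX,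
      dotH_ee p hi, TT_zero, TT_one, Pi.zero_apply, ee_zero hi, ee_one hi]; ring
  · simp only [cd, fderiv_XX, Pi.add_apply, Pi.smul_apply, smul_eq_mul, Ga_one, dotH_TT, XX,
      dotH_ee p hi, TT_zero, TT_one, Pi.zero_apply, ee_zero hi, ee_one hi]; ring
  · simp only [cd, fderiv_XX, Pi.add_apply, Pi.smul_apply, smul_eq_mul, Ga_ge _ _ _ h, XX,
      TT_ge _ h, Pi.zero_apply, ee_zero hi, ee_one hi]; ring

lemma cd_ZZ_XX {i : Fin (n+3)} (hi : 2 ≤ (i : ℕ)) :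
    cd H (ZZ H) (XX i) = fun p => ((1/2) * Hd H i p) • ZZ H p := by
  funext p; ext j
  rcases fin_cases3 j with rfl | rfl | h
  · simp only [cd, fderiv_XX, Pi.add_apply, Pi.smul_apply, smul_eq_mul, Ga_zero, dotH_ZZ, XX,
      dotH_ee p hi, ZZ_zero, ZZ_one, Pi.zero_apply, ee_zero hi, ee_one hi]; ring
  · simp only [cd, fderiv_XX, Pi.add_apply, Pi.smul_apply, smul_eq_mul, Ga_one, dotH_ZZ, XX,
      dotH_ee p hi, ZZ_zero, ZZ_one, Pi.zero_apply, ee_zero hi, ee_one hi]; ring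
  · simp only [cd, fderiv_XX, Pi.add_apply, Pi.smul_apply, smul_eq_mul, Ga_ge _ _ _ h, XX,
      ZZ_ge _ h, Pi.zero_apply, ee_zero hi, ee_one hi]; ring

lemma cd_XX_TT (hd : Differentiable ℝ H) {i : Fin (n+3)} (hi : 2 ≤ (i : ℕ)) :
    cd H (XX i) (TT H) = fun p => (-(1/2) * Hd H i p) • ZZ H p := by
  funext p; ext j
  have hu : fderiv ℝ H p (ee i) = Hd H i p := rfl
  rcases fin_cases3 j with rfl | rfl | h
  · simp only [cd, fderiv_TT hd, hu, Pi.add_apply, Pi.smul_apply, smul_eq_mul, Ga_zero, dotH_TT,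
      XX, dotH_ee p hi, TT_zero, TT_one, ZZ_zero, ee_zero hi, ee_one hi, ee_self]; ring
  · simp only [cd, fderiv_TT hd, hu, Pi.add_apply, Pi.smul_apply, smul_eq_mul, Ga_one, dotH_TT,
      XX, dotH_ee p hi, TT_zero, TT_one, ZZ_one, ee_zero hi, ee_one hi,
      ee_ne (n := n) (i := 0) (j := 1) (by simp)]; ring
  · simp only [cd, fderiv_TT hd, hu, Pi.add_apply, Pi.smul_apply, smul_eq_mul, Ga_ge _ _ _ h,
      XX, ZZ_ge _ h, ee_zero hi, ee_one hi,
      ee_zero_ge h]; ring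

lemma cd_XX_ZZ (hd : Differentiable ℝ H) {i : Fin (n+3)} (hi : 2 ≤ (i : ℕ)) :
    cd H (XX i) (ZZ H) = fun p => ((1/2) * Hd H i p) • TT H p := by
  funext p; ext j
  have hu : fderiv ℝ H p (ee i) = Hd H i p := rfl
  rcases fin_cases3 j with rfl | rfl | h
  · simp only [cd, fderiv_ZZ hd, hu, Pi.add_apply, Pi.smul_apply, smul_eq_mul, Ga_zero, dotH_ZZ,
      XX, dotH_ee p hi, ZZ_zero, ZZ_one, TT_zero, ee_zero hi, ee_one hi, ee_self]; ring
  · simp only [cd, fderiv_ZZ hd, hu, Pi.add_apply, Pi.smul_apply, smul_eq_mul, Ga_one, dotH_ZZ,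
      XX, dotH_ee p hi, ZZ_zero, ZZ_one, TT_one, ee_zero hi, ee_one hi,
      ee_ne (n := n) (i := 0) (j := 1) (by simp)]; ring
  · simp only [cd, fderiv_ZZ hd, hu, Pi.add_apply, Pi.smul_apply, smul_eq_mul, Ga_ge _ _ _ h,
      XX, TT_ge _ h, ee_zero hi, ee_one hi,
      ee_zero_ge h]; ring

lemma cd_XX_XX {i k : Fin (n+3)} (hi : 2 ≤ (i : ℕ)) (hk : 2 ≤ (k : ℕ)) :
    cd H (XX i) (XX k) = fun _ => 0 := by
  funext p; ext j
  rcases fin_cases3 j with rfl | rfl | h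
  · simp only [cd, fderiv_XX, Pi.add_apply, Ga_zero, XX, Pi.zero_apply, ee_zero hi, ee_one hi,
      ee_zero hk, ee_one hk]; ring
  · simp only [cd, fderiv_XX, Pi.add_apply, Ga_one, XX, Pi.zero_apply, ee_zero hi, ee_one hi,
      ee_zero hk, ee_one hk]; ring
  · simp only [cd, fderiv_XX, Pi.add_apply, Ga_ge _ _ _ h, XX, Pi.zero_apply, ee_zero hi,
      ee_one hi, ee_zero hk, ee_one hk]; ring

/-- The connection is torsion free, so brackets can be read off from the connection. -/
lemma br_eq (a b : V n → V n) (p : V n) : br a b p = cd H a b p - cd H b a p := by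
  have h : Ga H p (a p) (b p) = Ga H p (b p) (a p) := by
    ext j
    rcases fin_cases3 j with rfl | rfl | h
    · simp only [Ga_zero]; ring
    · simp only [Ga_one]; ring
    · simp only [Ga_ge _ _ _ h]; ring
  simp only [br, cd, h]; abel

lemma nab_sub_left (p a a' : V n) (b : V n → V n) :
    nab H p (a - a') b = nab H p a b - nab H p a' b := by
  rw [sub_eq_add_neg, ← neg_one_smul ℝ a', nab_add_left, nab_smul_left, neg_one_smul,
    sub_eq_add_neg]

/-- The curvature with the bracket expressed through the connection. -/
lemma Rcurv_eq (a b c : V n → V n) (p : V n) :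
    Rcurv H a b c p = nab H p (a p) (cd H b c) - nab H p (b p) (cd H a c)
      - (nab H p (cd H a b p) c - nab H p (cd H b a p) c) := by
  rw [Rcurv_eq_nab, br_eq (H := H), nab_sub_left]

lemma nab_const_smul_WW (hH : ContDiff ℝ (⊤ : ℕ∞) H) (p w : V n) (c : ℝ) :
    nab H p w (fun q => c • WW H q) = c • nab H p w (WW H) := by
  rw [nab_smul p w (differentiableAt_const c) (differentiable_WW hH p)]
  simp

lemma fderiv_const_mul_Hd (hH : ContDiff ℝ (⊤ : ℕ∞) H) (p w : V n) (c : ℝ) (i : Fin (n+3)) :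
    fderiv ℝ (fun q => c * Hd H i q) p w = c * fderiv ℝ (Hd H i) p w := by
  rw [fderiv_const_mul (differentiable_Hd hH i p)]; rfl

lemma nab_smul_TT (hH : ContDiff ℝ (⊤ : ℕ∞) H) (hd : Differentiable ℝ H) (p w : V n) (c : ℝ)
    (i : Fin (n+3)) :
    nab H p w (fun q => (c * Hd H i q) • TT H q)
      = (c * fderiv ℝ (Hd H i) p w) • TT H p + (c * Hd H i p) • nab H p w (TT H) := by
  rw [nab_smul p w ((differentiable_Hd hH i p).const_mul c) (differentiable_TT hd p),
    fderiv_const_mul_Hd hH]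

lemma nab_smul_ZZ (hH : ContDiff ℝ (⊤ : ℕ∞) H) (hd : Differentiable ℝ H) (p w : V n) (c : ℝ)
    (i : Fin (n+3)) :
    nab H p w (fun q => (c * Hd H i q) • ZZ H q)
      = (c * fderiv ℝ (Hd H i) p w) • ZZ H p + (c * Hd H i p) • nab H p w (ZZ H) := by
  rw [nab_smul p w ((differentiable_Hd hH i p).const_mul c) (differentiable_ZZ hd p),
    fderiv_const_mul_Hd hH]

lemma nab_WW_zero (hH : ContDiff ℝ (⊤ : ℕ∞) H) (p w : V n) : nab H p w (WW H) 0
    = (-(1/2) * H p * w 0 - (1/4) * ((H p)^2 - 1) * w 1) * dotH H p (WW H p) := by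
  simp only [nab, Pi.add_apply, fderiv_WW hH, Ga_zero, WW_zero, WW_one]; simp; ring

lemma nab_WW_one (hH : ContDiff ℝ (⊤ : ℕ∞) H) (p w : V n) : nab H p w (WW H) 1
    = (w 0 + (1/2) * H p * w 1) * dotH H p (WW H p) := by
  simp only [nab, Pi.add_apply, fderiv_WW hH, Ga_one, WW_zero, WW_one]; simp; ring

lemma nab_WW_ge (hH : ContDiff ℝ (⊤ : ℕ∞) H) (p w : V n) {j : Fin (n+3)} (h : 2 ≤ (j : ℕ)) :
    nab H p w (WW H) j = fderiv ℝ (Hd H j) p w := by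
  simp only [nab, Pi.add_apply, fderiv_WW hH, Ga_ge _ _ _ h, WW_zero, WW_one, h]; simp

end Frame

/-- The Ricci tensor of the standard Riemannian dual metric in the
orthonormal frame: `Ric(T,T) = (1/2)ΣᵢHᵢᵢ`, `Ric(Z,Z) = −(1/2)ΣᵢHᵢᵢ`,
`Ric(T,Z) = −(1/2)ΣᵢHᵢ²`, `Ric(Xᵢ,Xⱼ) = −(1/2)HᵢHⱼ`, `Ric(T,Xᵢ) = (1/2)H_{ui}` and
`Ric(Z,Xᵢ) = −(1/2)H_{ui}`. -/
theorem stmt_15 (n : ℕ) (H : V n → ℝ) (hH : ContDiff ℝ (⊤ : ℕ∞) H) (hHv : VIndep H) :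
    ∀ p : V n,
      Ric H (TT H) (TT H) p
        = (1/2) * ∑ i : Fin (n+3), (if 2 ≤ (i : ℕ) then Hd2 H i i p else 0) ∧
      Ric H (ZZ H) (ZZ H) p
        = -(1/2) * ∑ i : Fin (n+3), (if 2 ≤ (i : ℕ) then Hd2 H i i p else 0) ∧
      Ric H (TT H) (ZZ H) p
        = -(1/2) * ∑ i : Fin (n+3), (if 2 ≤ (i : ℕ) then (Hd H i p)^2 else 0) ∧
      (∀ i j : Fin (n+3), 2 ≤ (i : ℕ) → 2 ≤ (j : ℕ) →
        Ric H (XX i) (XX j) p = -(1/2) * (Hd H i p * Hd H j p)) ∧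
      (∀ i : Fin (n+3), 2 ≤ (i : ℕ) →
        Ric H (TT H) (XX i) p = (1/2) * Hd2 H 1 i p ∧
        Ric H (ZZ H) (XX i) p = -(1/2) * Hd2 H 1 i p) := by
  intro p
  have hd : Differentiable ℝ H := hH.differentiable (by simp)
  -- Frame derivatives at `p`, in the form in which they occur inside the curvature.
  have nTT : nab H p (TT H p) (TT H) = (1/2 : ℝ) • WW H p := congrFun (cd_TT_TT hd hHv) p
  have nZZ : nab H p (ZZ H p) (ZZ H) = (-(1/2) : ℝ) • WW H p := congrFun (cd_ZZ_ZZ hd hHv) p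
  have nTZ : nab H p (TT H p) (ZZ H) = 0 := congrFun (cd_TT_ZZ hd hHv) p
  have nZT : nab H p (ZZ H p) (TT H) = 0 := congrFun (cd_ZZ_TT hd hHv) p
  have nTX : ∀ i : Fin (n+3), 2 ≤ (i : ℕ) →
      nab H p (TT H p) (XX i) = (-(1/2) * Hd H i p) • TT H p :=
    fun i hi => congrFun (cd_TT_XX hi) p
  have nZX : ∀ i : Fin (n+3), 2 ≤ (i : ℕ) →
      nab H p (ZZ H p) (XX i) = ((1/2) * Hd H i p) • ZZ H p :=
    fun i hi => congrFun (cd_ZZ_XX hi) p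
  have nXT : ∀ i : Fin (n+3), 2 ≤ (i : ℕ) →
      nab H p (XX i p) (TT H) = (-(1/2) * Hd H i p) • ZZ H p :=
    fun i hi => congrFun (cd_XX_TT hd hi) p
  have nXZ : ∀ i : Fin (n+3), 2 ≤ (i : ℕ) →
      nab H p (XX i p) (ZZ H) = ((1/2) * Hd H i p) • TT H p :=
    fun i hi => congrFun (cd_XX_ZZ hd hi) p
  have dT : ∀ i, fderiv ℝ (Hd H i) p (TT H p) = -Hd2 H 1 i p := fun i =>
    fderiv_dir_TT p (Hd_v (differentiable_Hd hH i) (VIndep_Hd hHv i) p)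
  have dZ : ∀ i, fderiv ℝ (Hd H i) p (ZZ H p) = -Hd2 H 1 i p := fun i =>
    fderiv_dir_ZZ p (Hd_v (differentiable_Hd hH i) (VIndep_Hd hHv i) p)
  have dX : ∀ i j, fderiv ℝ (Hd H i) p (XX j p) = Hd2 H j i p := fun i j => rfl
  have n0 : ∀ c : V n → V n, nab H p 0 c = 0 := fun c => by
    simpa using nab_smul_left (H := H) p 0 0 c
  refine ⟨?_, ?_, ?_, ?_, ?_⟩
  · have hX : ∀ i : Fin (n+3), (if 2 ≤ (i : ℕ) then
        gg H p (Rcurv H (XX i) (TT H) (TT H) p) (ee i) else 0)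
        = (1/2) * (if 2 ≤ (i : ℕ) then Hd2 H i i p else 0)
          - (1/4) * (if 2 ≤ (i : ℕ) then (Hd H i p)^2 else 0) := by
      intro i
      split_ifs with hi
      · rw [gg_ee _ _ hi, Rcurv_eq, cd_TT_TT hd hHv, cd_XX_TT hd hi, cd_TT_XX hi,
          nab_const_smul_WW hH, nab_smul_ZZ hH hd, nab_smul_left, nab_smul_left, nTT, nZT, nTZ]
        simp only [Pi.sub_apply, Pi.add_apply, Pi.smul_apply, smul_eq_mul, nab_WW_ge hH _ _ hi,
          WW_ge _ hi, ZZ_ge _ hi, dX, Pi.zero_apply]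
        ring
      · ring
    have hself : Rcurv H (TT H) (TT H) (TT H) p = 0 := by rw [Rcurv_eq]; abel
    rw [Ric, Finset.sum_congr rfl fun i _ => hX i, Finset.sum_sub_distrib, ← Finset.mul_sum,
      ← Finset.mul_sum, ← dotH_WW, hself, gg_TT, gg_ZZ, Rcurv_eq, cd_TT_TT hd hHv,
      cd_ZZ_TT hd hHv, cd_TT_ZZ hd hHv, nab_const_smul_WW hH, nab_zero, n0]
    simp only [Pi.sub_apply, Pi.smul_apply, smul_eq_mul, nab_WW_zero hH, nab_WW_one hH,
      ZZ_zero, ZZ_one, Pi.zero_apply]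
    ring
  · have hX : ∀ i : Fin (n+3), (if 2 ≤ (i : ℕ) then
        gg H p (Rcurv H (XX i) (ZZ H) (ZZ H) p) (ee i) else 0)
        = -(1/2) * (if 2 ≤ (i : ℕ) then Hd2 H i i p else 0)
          - (1/4) * (if 2 ≤ (i : ℕ) then (Hd H i p)^2 else 0) := by
      intro i
      split_ifs with hi
      · rw [gg_ee _ _ hi, Rcurv_eq, cd_ZZ_ZZ hd hHv, cd_XX_ZZ hd hi, cd_ZZ_XX hi,
          nab_const_smul_WW hH, nab_smul_TT hH hd, nab_smul_left, nab_smul_left, nZZ, nZT, nTZ]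
        simp only [Pi.sub_apply, Pi.add_apply, Pi.smul_apply, smul_eq_mul, nab_WW_ge hH _ _ hi,
          WW_ge _ hi, TT_ge _ hi, dX, Pi.zero_apply]
        ring
      · ring
    have hself : Rcurv H (ZZ H) (ZZ H) (ZZ H) p = 0 := by rw [Rcurv_eq]; abel
    rw [Ric, Finset.sum_congr rfl fun i _ => hX i, Finset.sum_sub_distrib, ← Finset.mul_sum,
      ← Finset.mul_sum, ← dotH_WW, hself, gg_TT, gg_ZZ, Rcurv_eq, cd_ZZ_ZZ hd hHv,
      cd_ZZ_TT hd hHv, cd_TT_ZZ hd hHv, nab_const_smul_WW hH, nab_zero, n0]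
    simp only [Pi.sub_apply, Pi.smul_apply, smul_eq_mul, nab_WW_zero hH, nab_WW_one hH,
      TT_zero, TT_one, Pi.zero_apply]
    ring
  · have hX : ∀ i : Fin (n+3), (if 2 ≤ (i : ℕ) then
        gg H p (Rcurv H (XX i) (TT H) (ZZ H) p) (ee i) else 0)
        = -(1/2) * (if 2 ≤ (i : ℕ) then (Hd H i p)^2 else 0) := by
      intro i
      split_ifs with hi
      · rw [gg_ee _ _ hi, Rcurv_eq, cd_TT_ZZ hd hHv, cd_XX_ZZ hd hi, cd_XX_TT hd hi, cd_TT_XX hi,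
          nab_zero, nab_smul_TT hH hd, nab_smul_left, nab_smul_left, nTT, nZZ, nTZ]
        simp only [Pi.sub_apply, Pi.add_apply, Pi.smul_apply, smul_eq_mul,
          WW_ge _ hi, TT_ge _ hi, Pi.zero_apply]
        ring
      · ring
    have hself : Rcurv H (TT H) (TT H) (ZZ H) p = 0 := by rw [Rcurv_eq]; abel
    rw [Ric, Finset.sum_congr rfl fun i _ => hX i, ← Finset.mul_sum,
      ← dotH_WW, hself, gg_TT, gg_ZZ, Rcurv_eq, cd_ZZ_ZZ hd hHv,
      cd_ZZ_TT hd hHv, cd_TT_ZZ hd hHv, nab_const_smul_WW hH, nab_zero, n0]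
    simp only [Pi.sub_apply, Pi.smul_apply, smul_eq_mul, nab_WW_zero hH, nab_WW_one hH,
      TT_zero, TT_one, Pi.zero_apply]
    ring
  · intro i j hi hj
    have hX : ∀ k : Fin (n+3), (if 2 ≤ (k : ℕ) then
        gg H p (Rcurv H (XX k) (XX i) (XX j) p) (ee k) else 0) = 0 := by
      intro k
      split_ifs with hk
      · rw [gg_ee _ _ hk, Rcurv_eq, cd_XX_XX hi hj, cd_XX_XX hk hj, cd_XX_XX hk hi,
          cd_XX_XX hi hk, nab_zero, nab_zero, n0]
        simp
      · rfl
    rw [Ric, Finset.sum_congr rfl fun k _ => hX k, gg_TT, gg_ZZ, Rcurv_eq, Rcurv_eq,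
      cd_XX_XX hi hj, cd_TT_XX hj, cd_TT_XX hi, cd_ZZ_XX hj, cd_ZZ_XX hi, cd_XX_TT hd hi,
      cd_XX_ZZ hd hi, nab_smul_TT hH hd, nab_smul_ZZ hH hd]
    simp only [nab_smul_left, nab_zero, nTX j hj, nZX j hj, nXT i hi, nXZ i hi]
    simp only [Pi.sub_apply, Pi.add_apply, Pi.smul_apply, smul_eq_mul, TT_zero, TT_one, ZZ_zero,
      ZZ_one, Pi.zero_apply, Finset.sum_const_zero]
    ring
  · intro i hi
    constructor
    · have hX : ∀ k : Fin (n+3), (if 2 ≤ (k : ℕ) then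
          gg H p (Rcurv H (XX k) (TT H) (XX i) p) (ee k) else 0) = 0 := by
        intro k
        split_ifs with hk
        · rw [gg_ee _ _ hk, Rcurv_eq, cd_TT_XX hi, cd_XX_XX hk hi, cd_XX_TT hd hk,
            cd_TT_XX hk, nab_zero, nab_smul_TT hH hd]
          simp only [nab_smul_left, nTX i hi, nZX i hi, nXT k hk]
          simp only [Pi.sub_apply, Pi.add_apply, Pi.smul_apply, smul_eq_mul, TT_ge _ hk,
            ZZ_ge _ hk, Pi.zero_apply]
          ring
        · rfl
      have hself : Rcurv H (TT H) (TT H) (XX i) p = 0 := by rw [Rcurv_eq]; abel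
      rw [Ric, Finset.sum_congr rfl fun k _ => hX k, hself, gg_TT, gg_ZZ, Rcurv_eq,
        cd_TT_XX hi, cd_ZZ_XX hi, cd_ZZ_TT hd hHv, cd_TT_ZZ hd hHv, nab_smul_TT hH hd,
        nab_smul_ZZ hH hd, nZT, nTZ, n0, dT, dZ]
      simp only [Pi.sub_apply, Pi.add_apply, Pi.smul_apply, smul_eq_mul, TT_zero, TT_one,
        ZZ_zero, ZZ_one, Pi.zero_apply, Finset.sum_const_zero]
      ring
    · have hX : ∀ k : Fin (n+3), (if 2 ≤ (k : ℕ) then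
          gg H p (Rcurv H (XX k) (ZZ H) (XX i) p) (ee k) else 0) = 0 := by
        intro k
        split_ifs with hk
        · rw [gg_ee _ _ hk, Rcurv_eq, cd_ZZ_XX hi, cd_XX_XX hk hi, cd_XX_ZZ hd hk,
            cd_ZZ_XX hk, nab_zero, nab_smul_ZZ hH hd]
          simp only [nab_smul_left, nTX i hi, nZX i hi, nXZ k hk]
          simp only [Pi.sub_apply, Pi.add_apply, Pi.smul_apply, smul_eq_mul, TT_ge _ hk,
            ZZ_ge _ hk, Pi.zero_apply]
          ring
        · rfl
      have hself : Rcurv H (ZZ H) (ZZ H) (XX i) p = 0 := by rw [Rcurv_eq]; abel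
      rw [Ric, Finset.sum_congr rfl fun k _ => hX k, hself, gg_TT, gg_ZZ, Rcurv_eq,
        cd_TT_XX hi, cd_ZZ_XX hi, cd_ZZ_TT hd hHv, cd_TT_ZZ hd hHv, nab_smul_TT hH hd,
        nab_smul_ZZ hH hd, nZT, nTZ, n0, dT, dZ]
      simp only [Pi.sub_apply, Pi.add_apply, Pi.smul_apply, smul_eq_mul, TT_zero, TT_one,
        ZZ_zero, ZZ_one, Pi.zero_apply, Finset.sum_const_zero]
      ring
end
end
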